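/- Let k ≥ 2 and 2 ≤ ℓ ≤ k be integers, let u be a real number, and let z > max(u, 0). Then ∫₀^∞ e^{−Lz} · I_{k,ℓ}(u,L) dL = 2^{1−k} · (z−u)^{1−ℓ} · z^{ℓ−k−1}. -/

import Mathlib

open Real MeasureTheory

/-- `I_{k,ℓ}(u,L)`: the integral of `exp(2u(v₁+⋯+v_{ℓ−1}))` over the open simplex
`{v ∈ ℝ^{k−1} : vᵢ > 0, v₁+⋯+v_{k−1} < L/2}` (coordinates are 0-indexed:
`v i` is `v_{i+1}`). -/
noncomputable def Ikl (k l : ℕ) (u L : ℝ) : ℝ :=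
  ∫ v in {v : Fin (k-1) → ℝ | (∀ i, 0 < v i) ∧ ∑ i, v i < L/2},
    Real.exp (2 * u * ∑ i ∈ Finset.univ.filter (fun i : Fin (k-1) => i.val < l - 1), v i)

/-- The `j`-th (1-indexed) coordinate `w_j` for `1 ≤ j ≤ k−1`, with the convention
`w_k = L/2 − (w₁+⋯+w_{k−1})`. -/
noncomputable def wcoord (k : ℕ) (L : ℝ) (w : Fin (k-1) → ℝ) (j : ℕ) : ℝ :=
  if h : j - 1 < k - 1 then w ⟨j - 1, h⟩ else L/2 - ∑ i, w i

/-- `Ĩ_{k,ℓ}(u,L)`: the integral of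
`exp(−2u(w₂+⋯+w_ℓ))·(1−e^{−w_ℓ})^{−2u}·(1−e^{−w₁})^{2u}` over the open simplex
`{w ∈ ℝ^{k−1} : wᵢ > 0, w₁+⋯+w_{k−1} < L/2}`, where `w_k = L/2 − (w₁+⋯+w_{k−1})`. -/
noncomputable def Itkl (k l : ℕ) (u L : ℝ) : ℝ :=
  ∫ w in {w : Fin (k-1) → ℝ | (∀ i, 0 < w i) ∧ ∑ i, w i < L/2},
    Real.exp (-(2*u) * ∑ j ∈ Finset.Icc 2 l, wcoord k L w j)
      * (1 - Real.exp (-(wcoord k L w l))) ^ (-(2*u))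
      * (1 - Real.exp (-(wcoord k L w 1))) ^ (2*u)

lemma lap_exp_set (a c : ℝ) (ha : 0 < a) :
    Integrable ((Set.Ioi c).indicator (fun x : ℝ => Real.exp (-(a * x)))) ∧
    ∫ x, (Set.Ioi c).indicator (fun x : ℝ => Real.exp (-(a * x))) x
      = Real.exp (-(a * c)) * a⁻¹ := by
  have h1 := integrableOn_exp_mul_Ioi (a := -a) (by linarith) c
  have h2 := integral_exp_mul_Ioi (a := -a) (by linarith) c
  simp only [neg_mul] at h1 h2
  refine ⟨h1.integrable_indicator measurableSet_Ioi, ?_⟩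
  rw [integral_indicator measurableSet_Ioi, h2, neg_div_neg_eq, div_eq_mul_inv]

lemma lap_general (n : ℕ) (a : Fin n → ℝ) (z : ℝ) (hz : 0 < z) (ha : ∀ i, a i < 2 * z) :
    ∫ L in Set.Ioi (0:ℝ), Real.exp (-(L*z)) *
      ∫ v in {v : Fin n → ℝ | (∀ i, 0 < v i) ∧ ∑ i, v i < L/2}, Real.exp (∑ i, a i * v i)
      = (∏ i, (2 * z - a i)⁻¹) * z⁻¹ := by
  let F : ℝ → (Fin n → ℝ) → ℝ := fun L v =>
    {p : ℝ × (Fin n → ℝ) | (∀ i, 0 < p.2 i) ∧ ∑ i, p.2 i < p.1/2}.indicator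
      (fun p => Real.exp (-(p.1*z)) * Real.exp (∑ i, a i * p.2 i)) (L, v)
  let G : (Fin n → ℝ) → ℝ := fun v =>
    ∏ i, (Set.Ioi (0:ℝ)).indicator (fun x : ℝ => Real.exp (-((2 * z - a i) * x))) (v i)
  have hG : Integrable G := by
    refine Integrable.fintype_prod (𝕜 := ℝ)
      (f := fun i => (Set.Ioi (0:ℝ)).indicator (fun x : ℝ => Real.exp (-((2 * z - a i) * x)))) ?_
    intro i
    exact (lap_exp_set _ 0 (by linarith [ha i])).1
  have hGint : ∫ v, G v = ∏ i, (2 * z - a i)⁻¹ := by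
    have := integral_fintype_prod_volume_eq_prod (𝕜 := ℝ) (ι := Fin n)
      (fun i => (Set.Ioi (0:ℝ)).indicator (fun x : ℝ => Real.exp (-((2 * z - a i) * x))))
    refine this.trans (Finset.prod_congr rfl fun i _ => ?_)
    rw [(lap_exp_set _ 0 (by linarith [ha i])).2]
    simp
  have hFpos : ∀ L v, 0 ≤ F L v := fun L v =>
    Set.indicator_nonneg (fun p _ => by positivity) _
  have hF1 : ∀ v, (∀ i, 0 < v i) → (fun L => F L v) = fun L =>
      Real.exp (∑ i, a i * v i) * (Set.Ioi (2 * ∑ i, v i)).indicator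
        (fun x : ℝ => Real.exp (-(z * x))) L := by
    intro v hv
    funext L
    by_cases h : ∑ i, v i < L / 2
    · have h' : 2 * ∑ i, v i < L := by linarith
      simp only [F, Set.indicator, Set.mem_ofPred_eq, Set.mem_Ioi, hv, h, h', and_self,
        implies_true, if_true]
      rw [mul_comm, mul_comm L z]
    · have h' : ¬ 2 * ∑ i, v i < L := by intro h'; apply h; linarith
      simp only [F, Set.indicator, Set.mem_ofPred_eq, Set.mem_Ioi, h, h', and_false,
        if_false, mul_zero]
  have hF0 : ∀ v, ¬ (∀ i, 0 < v i) → (fun L => F L v) = fun L => 0 := by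
    intro v hv
    funext L
    simp only [F, Set.indicator, Set.mem_ofPred_eq, hv, false_and, if_false]
  have hFi : ∀ v, Integrable (fun L => F L v) := by
    intro v
    by_cases hv : ∀ i, 0 < v i
    · rw [hF1 v hv]
      exact (lap_exp_set z _ hz).1.const_mul _
    · rw [hF0 v hv]
      exact integrable_zero _ _ _
  have hFint : ∀ v, ∫ L, F L v = G v * z⁻¹ := by
    intro v
    by_cases hv : ∀ i, 0 < v i
    · rw [hF1 v hv, integral_const_mul, (lap_exp_set z _ hz).2, ← mul_assoc, ← Real.exp_add]
      congr 1
      simp only [G, Set.indicator, Set.mem_Ioi, hv, if_true]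
      rw [← Real.exp_sum]
      congr 1
      rw [Finset.mul_sum, Finset.mul_sum, ← Finset.sum_neg_distrib, ← Finset.sum_add_distrib]
      exact Finset.sum_congr rfl fun i _ => by ring
    · rw [hF0 v hv]
      push Not at hv
      obtain ⟨i, hi⟩ := hv
      have : G v = 0 := Finset.prod_eq_zero (Finset.mem_univ i)
        (Set.indicator_of_notMem (by simpa using hi) _)
      simp [this]
  have hmeas : Measurable (Function.uncurry F) := by
    refine Measurable.indicator (by fun_prop) ?_
    have e : {p : ℝ × (Fin n → ℝ) | (∀ i, 0 < p.2 i) ∧ ∑ i, p.2 i < p.1/2}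
      = (⋂ i, {p | 0 < p.2 i}) ∩ {p | ∑ i, p.2 i < p.1/2} := by
      ext p; simp
    rw [e]
    refine MeasurableSet.inter (MeasurableSet.iInter fun i => ?_) ?_
    · exact measurableSet_lt (by fun_prop) (by fun_prop)
    · exact measurableSet_lt (by fun_prop) (by fun_prop)
  have hint : Integrable (Function.uncurry F) ((volume : Measure ℝ).prod volume) := by
    rw [integrable_prod_iff' hmeas.aestronglyMeasurable]
    refine ⟨Filter.Eventually.of_forall hFi, ?_⟩
    have : (fun v => ∫ L, ‖Function.uncurry F (L, v)‖) = fun v => G v * z⁻¹ := by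
      funext v
      rw [← hFint v]
      exact integral_congr_ae (Filter.Eventually.of_forall fun L =>
        Real.norm_of_nonneg (hFpos L v))
    rw [this]
    exact hG.mul_const _
  have hS : ∀ L : ℝ, MeasurableSet {v : Fin n → ℝ | (∀ i, 0 < v i) ∧ ∑ i, v i < L/2} := by
    intro L
    have e : {v : Fin n → ℝ | (∀ i, 0 < v i) ∧ ∑ i, v i < L/2}
      = (⋂ i, {v | 0 < v i}) ∩ {v | ∑ i, v i < L/2} := by
      ext p; simp
    rw [e]
    refine MeasurableSet.inter (MeasurableSet.iInter fun i => ?_) ?_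
    · exact measurableSet_lt (by fun_prop) (by fun_prop)
    · exact measurableSet_lt (by fun_prop) (by fun_prop)
  have hL : ∀ L : ℝ, Real.exp (-(L*z)) *
      ∫ v in {v : Fin n → ℝ | (∀ i, 0 < v i) ∧ ∑ i, v i < L/2}, Real.exp (∑ i, a i * v i)
      = ∫ v, F L v := by
    intro L
    rw [← integral_const_mul, ← integral_indicator (hS L)]
    rfl
  simp_rw [hL]
  rw [setIntegral_eq_integral_of_forall_compl_eq_zero, integral_integral_swap hint]
  · simp_rw [hFint]
    rw [integral_mul_const, hGint]
  · intro L hLn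
    have : ∀ v, F L v = 0 := by
      intro v
      refine Set.indicator_of_notMem ?_ _
      rintro ⟨h1, h2⟩
      have h3 : 0 ≤ ∑ i, v i := Finset.sum_nonneg fun i _ => (h1 i).le
      simp only at h2
      simp only [Set.mem_Ioi, not_lt] at hLn
      linarith
    simp [this]

/-- **Laplace transform of `I_{k,ℓ}` (proof of Proposition 5.2).** For `2 ≤ ℓ ≤ k`,
`u ∈ ℝ` and `z > max(u,0)`,
`∫₀^∞ e^{−Lz} I_{k,ℓ}(u,L) dL = 2^{1−k}(z−u)^{1−ℓ} z^{ℓ−k−1}`. -/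
theorem stmt_3 (k l : ℕ) (hk : 2 ≤ k) (hl2 : 2 ≤ l) (hlk : l ≤ k)
    (u z : ℝ) (hz : max u 0 < z) :
    ∫ L in Set.Ioi (0:ℝ), Real.exp (-(L*z)) * Ikl k l u L
      = (2:ℝ)^(1 - (k:ℤ)) * (z - u)^(1 - (l:ℤ)) * z^((l:ℤ) - k - 1) := by
  have hz0 : 0 < z := lt_of_le_of_lt (le_max_right _ _) hz
  have hzu : 0 < z - u := sub_pos.2 (lt_of_le_of_lt (le_max_left _ _) hz)
  have key := lap_general (k-1) (fun i => if i.val < l - 1 then 2 * u else 0) z hz0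
    (by intro i; split_ifs <;> linarith)
  have e : ∀ L, Ikl k l u L = ∫ v in {v : Fin (k-1) → ℝ | (∀ i, 0 < v i) ∧ ∑ i, v i < L/2},
      Real.exp (∑ i, (if i.val < l - 1 then 2 * u else 0) * v i) := by
    intro L
    unfold Ikl
    simp_rw [Finset.mul_sum, Finset.sum_filter, ite_mul, zero_mul]
  simp_rw [e]
  rw [key]
  obtain ⟨m, rfl⟩ : ∃ m, l = m + 1 := ⟨l - 1, by omega⟩
  obtain ⟨p, rfl⟩ : ∃ p, k = m + p + 1 := ⟨k - 1 - m, by omega⟩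
  change (∏ i : Fin (m + p), (2 * z - if i.val < m then 2 * u else 0)⁻¹) * z⁻¹ = _
  rw [Fin.prod_univ_add]
  have h1 : (1 - ((m + p + 1 : ℕ) : ℤ)) = -((m + p : ℕ) : ℤ) := by push_cast; ring
  have h2 : (1 - ((m + 1 : ℕ) : ℤ)) = -((m : ℕ) : ℤ) := by push_cast; ring
  have h3 : (((m + 1 : ℕ) : ℤ) - ((m + p + 1 : ℕ) : ℤ) - 1) = -((p + 1 : ℕ) : ℤ) := by
    push_cast; ring
  rw [h1, h2, h3, zpow_neg, zpow_neg, zpow_neg, zpow_natCast, zpow_natCast, zpow_natCast]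
  simp only [Fin.val_castAdd, Fin.val_natAdd, Fin.is_lt, if_true, Finset.prod_const,
    Finset.card_univ, Fintype.card_fin, not_lt.2 (Nat.le_add_right m _), if_false, sub_zero]
  rw [← mul_sub, mul_inv, mul_inv, mul_pow, mul_pow]
  simp only [inv_pow, pow_succ, pow_add, mul_inv]
  ring
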